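/- arXiv:1607.07174 — 2 statements merged into one kernel-verified Lean document; each statement's English description precedes it below -/
import Mathlib

section
/- For every integer k ≥ 1 there exists a finite simple graph G and an induced subgraph H of G such that f_k(G) = 3 and f_k(H) ≥ k. -/
open scoped Classical
open scoped Function

namespace InducedArboricity

/-- The edges of the subgraph of `G` induced by vertex set `S`, viewed as edges of `G`. -/
def forestEdges {V : Type*} (G : SimpleGraph V) (S : Set V) : Set (Sym2 V) :=
  {e | e ∈ G.edgeSet ∧ ∀ x ∈ e, x ∈ S}

/-- The number of edges of the connected component of `v` in `H`. -/
noncomputable def compEdgeCount {W : Type*} (H : SimpleGraph W) (v : W) : ℕ :=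
  {e | e ∈ H.edgeSet ∧ ∀ x ∈ e, H.Reachable v x}.ncard

/-- `S` induces a `k`-strong forest in `G`: the induced subgraph is acyclic and each of its
connected components has at least `k` edges. -/
def IsStrongForest {V : Type*} (G : SimpleGraph V) (k : ℕ) (S : Set V) : Prop :=
  (G.induce S).IsAcyclic ∧ ∀ v : S, k ≤ compEdgeCount (G.induce S) v

/-- An edge `e` of `G` is `k`-valid if it lies in some `k`-strong forest of `G`. -/
def KValid {V : Type*} (G : SimpleGraph V) (k : ℕ) (e : Sym2 V) : Prop :=
  ∃ S : Set V, IsStrongForest G k S ∧ e ∈ forestEdges G S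

/-- The `k`-strong induced arboricity: the least number of `k`-strong forests of `G`
covering all `k`-valid edges of `G`. -/
noncomputable def fStrong {V : Type*} (G : SimpleGraph V) (k : ℕ) : ℕ :=
  sInf {N | ∃ F : Fin N → Set V,
    (∀ i, IsStrongForest G k (F i)) ∧
    ∀ e : Sym2 V, KValid G k e → ∃ i, e ∈ forestEdges G (F i)}

/-- `G` is a `d`-shallow minor of `H`. -/
def IsShallowMinor {V W : Type*} (d : ℕ) (G : SimpleGraph V) (H : SimpleGraph W) : Prop :=
  ∃ B : V → Set W,
    Pairwise (Disjoint on B) ∧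
    (∀ v, ∃ c : B v, ∀ y : B v,
      (H.induce (B v)).Reachable c y ∧ (H.induce (B v)).dist c y ≤ d) ∧
    (∀ u v, G.Adj u v → ∃ x ∈ B u, ∃ y ∈ B v, H.Adj x y)

/-- A class of finite simple graphs, one set of graphs for each number of vertices. -/
def GraphClass : Type :=
  ∀ n : ℕ, Set (SimpleGraph (Fin n))

/-- A class of graphs has bounded expansion if for every `d` there is a constant `a` such that
every `d`-shallow minor of a member of the class has at most `a` times as many edges
as vertices. -/
def BoundedExpansion (C : GraphClass) : Prop :=
  ∀ d : ℕ, ∃ a : ℕ, ∀ (m : ℕ) (G : SimpleGraph (Fin m)),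
    (∃ n : ℕ, ∃ H ∈ C n, IsShallowMinor d G H) → G.edgeSet.ncard ≤ a * m

/-- A class of graphs is nowhere dense if for every `d` some graph is not a `d`-shallow minor
of any member of the class. -/
def NowhereDense (C : GraphClass) : Prop :=
  ∀ d : ℕ, ∃ (m : ℕ) (G : SimpleGraph (Fin m)), ¬ ∃ n : ℕ, ∃ H ∈ C n, IsShallowMinor d G H

/-- The closed neighborhood of `v` in `G`. -/
def closedNbr {V : Type*} (G : SimpleGraph V) (v : V) : Set V :=
  insert v (G.neighborSet v)

/-- The sum of the labels over the closed neighborhood of `v`. -/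
noncomputable def closedNbrSum {V : Type*} [Fintype V] (G : SimpleGraph V)
    (f : V → ℕ) (v : V) : ℕ :=
  ∑ x : V, if x ∈ closedNbr G v then f x else 0

/-- A labeling is distinguishing if adjacent vertices with different closed neighborhoods
receive different label sums over their closed neighborhoods. -/
def Distinguishing {V : Type*} [Fintype V] (G : SimpleGraph V) (f : V → ℕ) : Prop :=
  ∀ u v : V, G.Adj u v → closedNbr G u ≠ closedNbr G v →
    closedNbrSum G f u ≠ closedNbrSum G f v

/-- The adjacent closed vertex-distinguishing number of `G`. -/
noncomputable def disNumber {V : Type*} [Fintype V] (G : SimpleGraph V) : ℕ :=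
  sInf {L | 1 ≤ L ∧ ∃ f : V → ℕ, (∀ v, 1 ≤ f v ∧ f v ≤ L) ∧ Distinguishing G f}

/-- A proper coloring in which any two color classes together induce a forest. -/
def IsAcyclicColoring {V : Type*} (G : SimpleGraph V) {m : ℕ} (c : V → Fin m) : Prop :=
  (∀ u v : V, G.Adj u v → c u ≠ c v) ∧
  ∀ i j : Fin m, (G.induce {v | c v = i ∨ c v = j}).IsAcyclic

/-- The acyclic chromatic number of `G`. -/
noncomputable def chiAcyc {V : Type*} (G : SimpleGraph V) : ℕ :=
  sInf {m | ∃ c : V → Fin m, IsAcyclicColoring G c}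

/-- The edge arboricity of `G`: the least number of (not necessarily induced) forests
covering all edges of `G`. -/
noncomputable def arboricity {V : Type*} (G : SimpleGraph V) : ℕ :=
  sInf {N | ∃ F : Fin N → SimpleGraph V,
    (∀ i, F i ≤ G ∧ (F i).IsAcyclic) ∧
    ∀ e ∈ G.edgeSet, ∃ i, e ∈ (F i).edgeSet}

/-- `G` admits a tree decomposition of width at most `t`. -/
def HasTreewidthAtMost {V : Type*} (G : SimpleGraph V) (t : ℕ) : Prop :=
  ∃ (ι : Type) (T : SimpleGraph ι) (B : ι → Finset V),
    T.IsTree ∧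
    (∀ e ∈ G.edgeSet, ∃ i, ∀ x ∈ e, x ∈ B i) ∧
    (∀ v : V, (T.induce {i | v ∈ B i}).Connected) ∧
    (∀ i, (B i).card ≤ t + 1)

/-- The tree-width of `G`. -/
noncomputable def treewidth {V : Type*} (G : SimpleGraph V) : ℕ :=
  sInf {t | HasTreewidthAtMost G t}

/-- `G` has tree-depth at most `d`: there is a "forest order" on the vertices (the
ancestor order of a rooted spanning forest) in which ancestor sets are chains of at most
`d` vertices and endpoints of edges of `G` are comparable.  Equivalently, every connected
component of `G` is a subgraph of the transitive closure of a rooted tree of depth `d`. -/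
def HasTreedepthAtMost {V : Type*} (G : SimpleGraph V) (d : ℕ) : Prop :=
  ∃ le : V → V → Prop, IsPartialOrder V le ∧
    (∀ v : V, IsChain le {u | le u v}) ∧
    (∀ u v : V, G.Adj u v → le u v ∨ le v u) ∧
    (∀ v : V, {u | le u v}.ncard ≤ d)

/-- The tree-depth of `G`. -/
noncomputable def treedepth {V : Type*} (G : SimpleGraph V) : ℕ :=
  sInf {d | HasTreedepthAtMost G d}

/-- `G` is a minor of `H`, witnessed by disjoint connected branch sets. -/
def IsMinorOf {V W : Type*} (G : SimpleGraph V) (H : SimpleGraph W) : Prop :=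
  ∃ B : V → Set W,
    Pairwise (Disjoint on B) ∧
    (∀ v, (B v).Nonempty) ∧
    (∀ v, (H.induce (B v)).Connected) ∧
    (∀ u v, G.Adj u v → ∃ x ∈ B u, ∃ y ∈ B v, H.Adj x y)

/-- A class of graphs closed under taking minors. -/
def MinorClosed (C : GraphClass) : Prop :=
  ∀ (m n : ℕ) (G : SimpleGraph (Fin m)) (H : SimpleGraph (Fin n)),
    H ∈ C n → IsMinorOf G H → G ∈ C m

/-- Planarity, via Wagner's characterization: no `K₅` and no `K₃,₃` minor. -/
def IsPlanar {V : Type*} (G : SimpleGraph V) : Prop :=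
  ¬ IsMinorOf (SimpleGraph.completeGraph (Fin 5)) G ∧
  ¬ IsMinorOf (completeBipartiteGraph (Fin 3) (Fin 3)) G

/-!
The graph `H` is a chain of `2k` triangles, consecutive ones sharing a vertex, and `G` is obtained
from `H` by attaching `k` leaves to every vertex of `H`.

In `G` every induced forest of `H` becomes `k`-strong once the leaves are added, so only induced
forests of `H` matter: three of them cover `H`, and the three edges of a triangle need three
different ones.

In `H` take the `k` edges consisting of the first two vertices of one of the last `k` triangles.
Each is `k`-valid because of the long path to its left. An induced forest with the first two
vertices of a triangle misses the third, so it is cut there, and to the right of the cut it has at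
most one edge in each of the fewer than `k` remaining triangles. Hence no `k`-strong forest contains
two of these edges.
-/

section Acyclicity

variable {V : Type*} {G : SimpleGraph V}

theorem exists_adj_ne_of_mem_support_of_isCycle {u v : V} {c : G.Walk v v} (hc : c.IsCycle)
    (hu : u ∈ c.support) :
    ∃ a ∈ c.support, ∃ b ∈ c.support, a ≠ b ∧ G.Adj u a ∧ G.Adj u b := by
  have hrot := hc.rotate hu
  have hsupp (i : ℕ) : (c.rotate u hu).getVert i ∈ c.support :=
    (SimpleGraph.Walk.mem_support_rotate_iff c u hu).1 (SimpleGraph.Walk.getVert_mem_support _ i)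
  exact ⟨_, hsupp _, _, hsupp _, hrot.snd_ne_penultimate,
    SimpleGraph.Walk.adj_snd hrot.not_nil, (SimpleGraph.Walk.adj_penultimate hrot.not_nil).symm⟩

theorem isAcyclic_of_subsingleton_smaller_neighbors [LinearOrder V]
    (h : ∀ v, {w | G.Adj v w ∧ w < v}.Subsingleton) : G.IsAcyclic := by
  intro v c hc
  obtain ⟨u, hu, hmax⟩ := c.support.toFinset.exists_max_image id ⟨v, by simp⟩
  simp only [List.mem_toFinset, id] at hu hmax
  obtain ⟨a, ha, b, hb, hne, hua, hub⟩ := exists_adj_ne_of_mem_support_of_isCycle hc hu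
  exact hne (h u ⟨hua, (hmax a ha).lt_of_ne hua.ne'⟩ ⟨hub, (hmax b hb).lt_of_ne hub.ne'⟩)

theorem isAcyclic_of_induce_of_subsingleton_neighborSet {U : Set V} (hU : (G.induce U).IsAcyclic)
    (h : ∀ v ∉ U, (G.neighborSet v).Subsingleton) : G.IsAcyclic := by
  intro v c hc
  have hcU : ∀ u ∈ c.support, u ∈ U := by
    intro u hu
    by_contra huU
    obtain ⟨a, -, b, -, hne, hua, hub⟩ := exists_adj_ne_of_mem_support_of_isCycle hc hu
    exact hne (h u huU hua hub)
  refine hU (c.induce U hcU) ?_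
  rw [← SimpleGraph.Walk.isCycle_map_iff_of_injective
    (f := (SimpleGraph.Embedding.induce U).toHom) Subtype.val_injective]
  simpa using hc

theorem not_adj_of_isAcyclic_induce {S : Set V} (hS : (G.induce S).IsAcyclic) {a b c : V}
    (ha : a ∈ S) (hb : b ∈ S) (hc : c ∈ S) (hab : G.Adj a b) (hac : G.Adj a c) : ¬ G.Adj b c := by
  intro hbc
  have hclique : (G.induce S).IsNClique 3 {⟨a, ha⟩, ⟨b, hb⟩, ⟨c, hc⟩} :=
    SimpleGraph.is3Clique_triple_iff.2 (by simp [hab, hac, hbc])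
  exact hS.cliqueFree le_rfl _ hclique

theorem pathGraph_isTree (n : ℕ) : (SimpleGraph.pathGraph (n + 1)).IsTree where
  connected := SimpleGraph.pathGraph_connected n
  isAcyclic := by
    refine isAcyclic_of_subsingleton_smaller_neighbors fun v a ha b hb => ?_
    simp only [Set.mem_ofPred_eq, SimpleGraph.pathGraph_adj, Fin.lt_def] at ha hb
    omega

end Acyclicity

section EdgeCount

variable {V W : Type*} {G : SimpleGraph V} {H : SimpleGraph W}

theorem compEdgeCount_iso (φ : G ≃g H) (v : V) :
    compEdgeCount H (φ v) = compEdgeCount G v := by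
  refine (Set.ncard_congr (fun e _ => e.map φ) ?_
    (fun _ _ _ _ h => Sym2.map.injective φ.injective h) ?_).symm
  · rintro ⟨a, b⟩ h
    simpa [φ.reachable_iff, φ.map_adj_iff] using h
  · rintro ⟨a, b⟩ h
    obtain ⟨a, rfl⟩ := φ.surjective a
    obtain ⟨b, rfl⟩ := φ.surjective b
    exact ⟨s(a, b), by simpa [φ.reachable_iff, φ.map_adj_iff] using h, rfl⟩

theorem ncard_neighborSet_le_compEdgeCount [Finite V] {u v : V} (h : G.Reachable v u) :
    (G.neighborSet u).ncard ≤ compEdgeCount G v := by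
  refine Set.ncard_le_ncard_of_injOn (fun w => s(u, w)) ?_ ?_ (Set.toFinite _)
  · intro w (hw : G.Adj u w)
    refine ⟨hw, fun x hx => ?_⟩
    obtain rfl | rfl := Sym2.mem_iff.1 hx
    exacts [h, h.trans hw.reachable]
  · exact fun a _ b _ hab => Sym2.congr_right.1 hab

theorem compEdgeCount_of_connected (h : G.Connected) (v : V) :
    compEdgeCount G v = Nat.card G.edgeSet := by
  simp [compEdgeCount, h.preconnected v _]

theorem compEdgeCount_induce_le [Finite V] {S C : Set V} {v : S} (hv : v.1 ∈ C)
    (hC : ∀ a ∈ S ∩ C, ∀ b ∈ S, G.Adj a b → b ∈ C) :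
    compEdgeCount (G.induce S) v ≤ (forestEdges G (S ∩ C)).ncard := by
  have hreach : ∀ w : S, (G.induce S).Reachable v w → w.1 ∈ C := by
    intro w hw
    rw [SimpleGraph.reachable_iff_reflTransGen] at hw
    induction hw with
    | refl => exact hv
    | @tail a b _ hab ha => exact hC a ⟨a.2, ha⟩ b b.2 hab
  refine Set.ncard_le_ncard_of_injOn (Sym2.map Subtype.val) ?_
    (Sym2.map.injective Subtype.val_injective).injOn (Set.toFinite _)
  rintro ⟨a, b⟩ ⟨hab, he⟩
  refine ⟨hab, fun x hx => ?_⟩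
  obtain ⟨y, hy, rfl⟩ := Sym2.mem_map.1 hx
  exact ⟨y.2, hreach y (he y hy)⟩

end EdgeCount

section StrongForest

variable {V W : Type*} {G : SimpleGraph V} {H : SimpleGraph W} {k : ℕ}

theorem mk_mem_forestEdges {S : Set V} {a b : V} :
    s(a, b) ∈ forestEdges G S ↔ G.Adj a b ∧ a ∈ S ∧ b ∈ S := by
  simp [forestEdges]

theorem IsStrongForest.of_iso {S : Set V} {T : Set W} (φ : G.induce S ≃g H.induce T)
    (hS : IsStrongForest G k S) : IsStrongForest H k T := by
  refine ⟨φ.isAcyclic_iff.1 hS.1, fun w => ?_⟩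
  obtain ⟨v, rfl⟩ := φ.surjective w
  exact (compEdgeCount_iso φ v).symm ▸ hS.2 v

theorem isStrongForest_range_of_isTree (f : H ↪g G) (hH : H.IsTree)
    (hk : k < Nat.card W) : IsStrongForest G k (Set.range f) := by
  refine ⟨f.isoInduceRange.isAcyclic_iff.1 hH.isAcyclic, fun v => ?_⟩
  obtain ⟨w, rfl⟩ := f.isoInduceRange.surjective v
  have : Finite W := Nat.finite_of_card_ne_zero hk.ne_bot
  have hcard := (SimpleGraph.isTree_iff_connected_and_card.1 hH).2
  rw [compEdgeCount_iso, compEdgeCount_of_connected hH.connected]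
  omega

/-- The sets `F i` are `k`-strong forests that together cover all `k`-valid edges of `G`; the least
possible number of them is `fStrong G k`. -/
def IsStrongForestCover {N : ℕ} (G : SimpleGraph V) (k : ℕ) (F : Fin N → Set V) : Prop :=
  (∀ i, IsStrongForest G k (F i)) ∧ ∀ e, KValid G k e → ∃ i, e ∈ forestEdges G (F i)

theorem IsStrongForestCover.fStrong_le {N : ℕ} {F : Fin N → Set V}
    (hF : IsStrongForestCover G k F) : fStrong G k ≤ N :=
  Nat.sInf_le ⟨F, hF⟩

theorem exists_isStrongForestCover [Finite V] (G : SimpleGraph V) (k : ℕ) :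
    ∃ F : Fin (fStrong G k) → Set V, IsStrongForestCover G k F := by
  obtain ⟨N, ⟨σ⟩⟩ := Finite.exists_equiv_fin {S : Set V // IsStrongForest G k S}
  refine Nat.sInf_mem (s := {N | ∃ F : Fin N → Set V, IsStrongForestCover G k F})
    ⟨N, fun i => (σ.symm i).1, fun i => (σ.symm i).2, ?_⟩
  rintro e ⟨S, hS, he⟩
  exact ⟨σ ⟨S, hS⟩, by simpa using he⟩

theorem map_mem_forestEdges_image (φ : G ≃g H) {S : Set V} {e : Sym2 V} :
    e.map φ ∈ forestEdges H (φ '' S) ↔ e ∈ forestEdges G S := by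
  induction e with | _ a b
  simp [mk_mem_forestEdges, φ.map_adj_iff]

theorem IsStrongForest.image {S : Set V} (hS : IsStrongForest G k S) (φ : G ≃g H) :
    IsStrongForest H k (φ '' S) :=
  hS.of_iso (φ.induce φ.injective.injOn.bijOn_image)

theorem KValid.map {e : Sym2 V} (he : KValid G k e) (φ : G ≃g H) : KValid H k (e.map φ) := by
  obtain ⟨S, hS, heS⟩ := he
  exact ⟨φ '' S, hS.image φ, (map_mem_forestEdges_image φ).2 heS⟩

theorem IsStrongForestCover.image {N : ℕ} {F : Fin N → Set V} (hF : IsStrongForestCover G k F)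
    (φ : G ≃g H) : IsStrongForestCover H k (fun i => φ '' F i) := by
  refine ⟨fun i => (hF.1 i).image φ, fun e he => ?_⟩
  obtain ⟨i, hi⟩ := hF.2 _ (he.map φ.symm)
  refine ⟨i, ?_⟩
  have := (map_mem_forestEdges_image φ).2 hi
  simpa [Sym2.map_map] using this

theorem fStrong_congr (φ : G ≃g H) (k : ℕ) : fStrong G k = fStrong H k := by
  refine congrArg sInf (Set.ext fun N => ⟨?_, ?_⟩)
  · rintro ⟨F, hF⟩
    exact ⟨_, IsStrongForestCover.image hF φ⟩
  · rintro ⟨F, hF⟩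
    exact ⟨_, IsStrongForestCover.image hF φ.symm⟩

theorem card_le_fStrong [Finite V] {ι : Type*} {E : ι → Sym2 V} (hE : ∀ i, KValid G k (E i))
    (hS : ∀ S, IsStrongForest G k S → {i | E i ∈ forestEdges G S}.Subsingleton) :
    Nat.card ι ≤ fStrong G k := by
  obtain ⟨F, hF, hcover⟩ := exists_isStrongForestCover G k
  choose g hg using fun i => hcover (E i) (hE i)
  have hinj : Function.Injective g := fun i j hij => hS _ (hF (g i)) (hg i) (hij ▸ hg j)
  simpa using Nat.card_le_card_of_injective g hinj

theorem three_le_fStrong_of_triangle [Finite V] {a b c : V} (hab : KValid G k s(a, b))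
    (hac : KValid G k s(a, c)) (hbc : KValid G k s(b, c)) : 3 ≤ fStrong G k := by
  have adj {v w : V} : KValid G k s(v, w) → G.Adj v w := fun ⟨_, _, h⟩ => h.1
  let E : Fin 3 → Sym2 V := ![s(a, b), s(a, c), s(b, c)]
  have hE : ∀ i, KValid G k (E i) := by simp [E, Fin.forall_fin_succ, *]
  simpa using card_le_fStrong hE fun S hS i hi j hj => by
    by_contra hij
    have habc : a ∈ S ∧ b ∈ S ∧ c ∈ S := by
      fin_cases i <;> fin_cases j <;> simp_all [E, mk_mem_forestEdges]
    exact not_adj_of_isAcyclic_induce hS.1 habc.1 habc.2.1 habc.2.2 (adj hab) (adj hac) (adj hbc)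

end StrongForest

section Corona

variable {V : Type*} {G : SimpleGraph V} {k : ℕ}

/-- The `k`-corona of `G`: to each vertex `v` of `G`, represented by `(v, none)`, the leaves
`(v, some i)` are attached, one for each `i : Fin k`. -/
def corona (G : SimpleGraph V) (k : ℕ) : SimpleGraph (V × Option (Fin k)) where
  Adj
    | (v, none), (w, none) => G.Adj v w
    | (v, none), (w, some _) | (v, some _), (w, none) => v = w
    | (_, some _), (_, some _) => False
  symm := ⟨by rintro ⟨v, _ | i⟩ ⟨w, _ | j⟩ h <;> first | exact h.symm | exact h⟩
  loopless := ⟨by rintro ⟨v, _ | i⟩ h; exacts [G.irrefl h, h]⟩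

@[simp]
theorem corona_adj_none_none {v w : V} : (corona G k).Adj (v, none) (w, none) ↔ G.Adj v w :=
  Iff.rfl

@[simp]
theorem corona_adj_none_some {v w : V} {i : Fin k} :
    (corona G k).Adj (v, none) (w, some i) ↔ v = w :=
  Iff.rfl

@[simp]
theorem corona_adj_some_none {v w : V} {i : Fin k} :
    (corona G k).Adj (v, some i) (w, none) ↔ v = w :=
  Iff.rfl

@[simp]
theorem corona_adj_some_some {v w : V} {i j : Fin k} :
    ¬ (corona G k).Adj (v, some i) (w, some j) :=
  id

/-- The embedding of `G` in its `k`-corona. -/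
def coronaEmbedding (G : SimpleGraph V) (k : ℕ) : G ↪g corona G k where
  toFun v := (v, none)
  inj' _ _ h := congrArg Prod.fst h
  map_rel_iff' := Iff.rfl

theorem corona_isAcyclic (hG : G.IsAcyclic) : (corona G k).IsAcyclic := by
  refine isAcyclic_of_induce_of_subsingleton_neighborSet (U := Set.range (coronaEmbedding G k))
    ((coronaEmbedding G k).isoInduceRange.isAcyclic_iff.1 hG) ?_
  rintro ⟨v, _ | i⟩ hv
  · exact (hv ⟨v, rfl⟩).elim
  · rintro ⟨a, _ | _⟩ ha ⟨b, _ | _⟩ hb <;> simp_all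

theorem isStrongForest_corona_preimage_fst [Finite V] {A : Set V} (hA : (G.induce A).IsAcyclic) :
    IsStrongForest (corona G k) k (Prod.fst ⁻¹' A) := by
  set H := (corona G k).induce (Prod.fst ⁻¹' A)
  refine ⟨?_, ?_⟩
  · let f : H →g corona (G.induce A) k :=
      { toFun x := (⟨x.1.1, x.2⟩, x.1.2)
        map_rel' := by rintro ⟨⟨v, _ | i⟩, hv⟩ ⟨⟨w, _ | j⟩, hw⟩ h <;> simp_all [H] }
    refine (corona_isAcyclic hA).comap f ?_
    rintro ⟨⟨v, i⟩, hv⟩ ⟨⟨w, j⟩, hw⟩ h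
    simpa [f] using h
  · rintro ⟨⟨v, i⟩, hv : v ∈ A⟩
    let base : (Prod.fst ⁻¹' A : Set (V × Option (Fin k))) := ⟨(v, none), hv⟩
    let leaf (j : Fin k) : (Prod.fst ⁻¹' A : Set (V × Option (Fin k))) := ⟨(v, some j), hv⟩
    have hreach : H.Reachable ⟨(v, i), hv⟩ base := by
      cases i with
      | none => exact .rfl
      | some i => exact SimpleGraph.Adj.reachable (by simp [H, base])
    calc k = (Set.range leaf).ncard := by
          rw [Set.ncard_range_of_injective fun i j h => by simpa [leaf] using h, Nat.card_fin]
      _ ≤ (H.neighborSet base).ncard := by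
          refine Set.ncard_le_ncard ?_
          rintro _ ⟨j, rfl⟩
          simp [H, base, leaf]
      _ ≤ compEdgeCount H ⟨(v, i), hv⟩ := ncard_neighborSet_le_compEdgeCount hreach

theorem kValid_corona_of_adj [Finite V] {v w : V} (h : G.Adj v w) :
    KValid (corona G k) k s((v, none), (w, none)) := by
  refine ⟨Prod.fst ⁻¹' {v, w}, isStrongForest_corona_preimage_fst (.of_card_le_two ?_), ?_⟩
  · exact (Set.encard_pair h.ne).le
  · simp [mk_mem_forestEdges, h]

theorem fStrong_corona_le [Finite V] {N : ℕ} {F : Fin N → Set V}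
    (hF : ∀ i, (G.induce (F i)).IsAcyclic) (hvert : ∀ v, ∃ i, v ∈ F i)
    (hedge : ∀ v w, G.Adj v w → ∃ i, v ∈ F i ∧ w ∈ F i) : fStrong (corona G k) k ≤ N := by
  refine IsStrongForestCover.fStrong_le (F := fun i => Prod.fst ⁻¹' F i)
    ⟨fun i => isStrongForest_corona_preimage_fst (hF i), ?_⟩
  rintro ⟨⟨v, i⟩, ⟨w, j⟩⟩ ⟨-, -, hvw : (corona G k).Adj (v, i) (w, j), -⟩
  suffices ∃ l, v ∈ F l ∧ w ∈ F l by
    obtain ⟨l, hl⟩ := this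
    exact ⟨l, mk_mem_forestEdges.2 ⟨hvw, hl⟩⟩
  rcases i with _ | i <;> rcases j with _ | j
  · exact hedge v w hvw
  · obtain rfl : v = w := hvw
    simpa using hvert v
  · obtain rfl : v = w := hvw
    simpa using hvert v
  · exact hvw.elim

end Corona

section TriangleChain

variable {n k : ℕ}

/-- The chain of `n` triangles `{2t, 2t + 1, 2t + 2}` for `t < n`; an edge with smaller endpoint `a`
lies in the triangle with `t = a / 2`. -/
def triangleChain (n : ℕ) : SimpleGraph (Fin (2 * n + 1)) :=
  SimpleGraph.fromRel fun a b => a < b ∧ b.val ≤ 2 * (a.val / 2) + 2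

theorem triangleChain_adj_of_lt {a b : Fin (2 * n + 1)} (h : a < b) :
    (triangleChain n).Adj a b ↔ b.val ≤ 2 * (a.val / 2) + 2 := by
  simp [triangleChain, h, h.ne, h.not_gt]

theorem isAcyclic_induce_triangleChain_iff {S : Set (Fin (2 * n + 1))} :
    ((triangleChain n).induce S).IsAcyclic ↔
      ∀ a ∈ S, ∀ b ∈ S, ∀ c ∈ S, a < b → b < c → ¬ (triangleChain n).Adj a c := by
  constructor
  · intro h a ha b hb c hc hab hbc hac
    have hle := (triangleChain_adj_of_lt (hab.trans hbc)).1 hac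
    refine not_adj_of_isAcyclic_induce h ha hb hc ?_ hac ?_
    · rw [triangleChain_adj_of_lt hab]
      omega
    · rw [triangleChain_adj_of_lt hbc]
      omega
  · refine fun h => isAcyclic_of_subsingleton_smaller_neighbors fun c a ha b hb => ?_
    by_contra hne
    wlog hab : a < b generalizing a b
    · exact this b hb a ha (Ne.symm hne) ((not_lt.1 hab).lt_of_ne' hne)
    exact h a a.2 b b.2 c c.2 hab hb.2 ha.1.symm

theorem exists_lt_of_mem_forestEdges_triangleChain {S : Set (Fin (2 * n + 1))}
    {e : Sym2 (Fin (2 * n + 1))} (he : e ∈ forestEdges (triangleChain n) S) :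
    ∃ a ∈ S, ∃ b ∈ S, a < b ∧ b.val ≤ 2 * (a.val / 2) + 2 ∧ e = s(a, b) := by
  induction e with | _ a b
  obtain ⟨hadj, ha, hb⟩ := mk_mem_forestEdges.1 he
  rcases hadj.ne.lt_or_gt with hab | hba
  · exact ⟨a, ha, b, hb, hab, (triangleChain_adj_of_lt hab).1 hadj, rfl⟩
  · exact ⟨b, hb, a, ha, hba, (triangleChain_adj_of_lt hba).1 hadj.symm, Sym2.eq_swap⟩

theorem ncard_forestEdges_triangleChain_le {S : Set (Fin (2 * n + 1))} {m : ℕ}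
    (hS : ((triangleChain n).induce S).IsAcyclic) (hm : ∀ a ∈ S, 2 * m ≤ a.val) :
    (forestEdges (triangleChain n) S).ncard ≤ n - m := by
  have le_of_div_eq : ∀ a ∈ S, ∀ b ∈ S, ∀ c ∈ S, ∀ d ∈ S, a < b → c < d →
      d.val ≤ 2 * (c.val / 2) + 2 → a.val / 2 = c.val / 2 → c ≤ a ∧ d ≤ b := by
    intro a ha b hb c hc d hd hab hcd hle hac
    have hnot := isAcyclic_induce_triangleChain_iff.1 hS a ha
    refine ⟨not_lt.1 fun h => hnot c hc d hd h hcd ?_, not_lt.1 fun h => hnot b hb d hd hab h ?_⟩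
    · rwa [triangleChain_adj_of_lt (h.trans hcd), hac]
    · rwa [triangleChain_adj_of_lt (hab.trans h), hac]
  calc (forestEdges (triangleChain n) S).ncard ≤ (Set.Ico m n).ncard := by
        refine Set.ncard_le_ncard_of_injOn (fun e => e.inf.val / 2) ?_ ?_ (Set.finite_Ico m n)
        · intro e he
          obtain ⟨a, ha, b, -, hab, -, rfl⟩ := exists_lt_of_mem_forestEdges_triangleChain he
          have := hm a ha
          simp only [Sym2.inf_mk, inf_eq_left.2 hab.le, Set.mem_Ico]
          omega
        · intro e he e' he' hee'
          obtain ⟨a, ha, b, hb, hab, hle, rfl⟩ := exists_lt_of_mem_forestEdges_triangleChain he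
          obtain ⟨c, hc, d, hd, hcd, hle', rfl⟩ := exists_lt_of_mem_forestEdges_triangleChain he'
          simp only [Sym2.inf_mk, inf_eq_left.2 hab.le, inf_eq_left.2 hcd.le] at hee'
          obtain ⟨hca, hdb⟩ := le_of_div_eq a ha b hb c hc d hd hab hcd hle' hee'
          obtain ⟨hac, hbd⟩ := le_of_div_eq c hc d hd a ha b hb hcd hab hle hee'.symm
          rw [hca.antisymm hac, hdb.antisymm hbd]
    _ = n - m := by simp [← Finset.coe_Ico]

theorem fStrong_corona_triangleChain_le : fStrong (corona (triangleChain n) k) k ≤ 3 := by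
  -- The even vertices form the spine. Keeping the odd vertices and every other spine vertex leaves
  -- one of the two spine vertices of each triangle.
  refine fStrong_corona_le (F := ![{v | v.val % 2 = 0}, {v | v.val % 4 ≠ 2}, {v | v.val % 4 ≠ 0}])
    (fun i => ?_) (fun v => ?_) (fun v w hvw => ?_)
  · rw [isAcyclic_induce_triangleChain_iff]
    intro a ha b hb c hc hab hbc hac
    rw [triangleChain_adj_of_lt (hab.trans hbc)] at hac
    rw [Fin.lt_def] at hab hbc
    fin_cases i <;>
      simp only [Fin.zero_eta, Fin.mk_one, Fin.reduceFinMk, Matrix.cons_val, Set.mem_ofPred_eq]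
        at ha hb hc <;>
      omega
  · simp only [Fin.exists_fin_succ, Matrix.cons_val_zero, Matrix.cons_val_succ,
      Matrix.cons_val_fin_one, Set.mem_ofPred_eq, exists_const]
    omega
  · wlog hlt : v < w generalizing v w
    · obtain ⟨i, hi⟩ := this w v hvw.symm (hvw.ne.lt_of_le' (not_lt.1 hlt))
      exact ⟨i, hi.symm⟩
    rw [triangleChain_adj_of_lt hlt] at hvw
    rw [Fin.lt_def] at hlt
    simp only [Fin.exists_fin_succ, Matrix.cons_val_zero, Matrix.cons_val_succ,
      Matrix.cons_val_fin_one, Set.mem_ofPred_eq, exists_const]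
    omega

theorem three_le_fStrong_corona_triangleChain (hn : 0 < n) :
    3 ≤ fStrong (corona (triangleChain n) k) k := by
  have valid {a b : Fin (2 * n + 1)} (hab : a < b) (hb : b.val ≤ 2) :
      KValid (corona (triangleChain n) k) k s((a, none), (b, none)) :=
    kValid_corona_of_adj ((triangleChain_adj_of_lt hab).2 (by omega))
  exact three_le_fStrong_of_triangle
    (valid (a := ⟨0, by omega⟩) (b := ⟨1, by omega⟩) (by simp [Fin.lt_def]) (by simp))
    (valid (b := ⟨2, by omega⟩) (by simp [Fin.lt_def]) (by simp))
    (valid (by simp [Fin.lt_def]) (by simp))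

/-- The path `0, 2, 4, …, 2t, 2t + 1`, which takes one edge from each of the triangles
`0, …, t`. -/
def spinePath (t : Fin n) : SimpleGraph.pathGraph (t + 2) ↪g triangleChain n where
  toFun i := ⟨min (2 * i) (2 * t + 1), by omega⟩
  inj' i j h := by
    simp only [Fin.mk.injEq] at h
    omega
  map_rel_iff' {i j} := by
    change (triangleChain n).Adj ⟨_, _⟩ ⟨_, _⟩ ↔ _
    simp only [triangleChain, SimpleGraph.fromRel_adj, SimpleGraph.pathGraph_adj, ne_eq,
      Fin.mk.injEq, Fin.mk_lt_mk]
    omega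

theorem spinePath_apply_val (t : Fin n) (i : Fin (t + 2)) :
    (spinePath t i).val = min (2 * i.val) (2 * t.val + 1) :=
  rfl

/-- The edge between the first two vertices `2t` and `2t + 1` of the `t`-th triangle. -/
def firstEdge (t : Fin n) : Sym2 (Fin (2 * n + 1)) :=
  s(⟨2 * t, by omega⟩, ⟨2 * t + 1, by omega⟩)

theorem kValid_firstEdge {t : Fin n} (h : k ≤ t + 1) :
    KValid (triangleChain n) k (firstEdge t) := by
  have hadj : (SimpleGraph.pathGraph (t + 2)).Adj ⟨t, by omega⟩ ⟨t + 1, by omega⟩ := by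
    simp [SimpleGraph.pathGraph_adj]
  have hfirst : firstEdge t = s(spinePath t ⟨t, by omega⟩, spinePath t ⟨t + 1, by omega⟩) := by
    rw [firstEdge]
    congr 1 <;> exact Fin.ext (by simp [spinePath_apply_val])
  refine ⟨Set.range (spinePath t),
    isStrongForest_range_of_isTree _ (pathGraph_isTree _) (by simpa using by omega), ?_⟩
  rw [hfirst]
  exact mk_mem_forestEdges.2 ⟨(spinePath t).map_rel_iff.2 hadj, ⟨_, rfl⟩, ⟨_, rfl⟩⟩

theorem compEdgeCount_induce_triangleChain_le {S : Set (Fin (2 * n + 1))}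
    (hS : ((triangleChain n).induce S).IsAcyclic) {t : ℕ} (ht : ∀ a ∈ S, a.val ≠ 2 * t) {v : S}
    (hv : 2 * t < v.1.val) : compEdgeCount ((triangleChain n).induce S) v ≤ n - t := by
  refine (compEdgeCount_induce_le (C := {a | 2 * t < a.val}) (Set.mem_ofPred_eq ▸ hv) ?_).trans
    (ncard_forestEdges_triangleChain_le ?_ fun a ha => ha.2.le)
  · rintro a ⟨-, hat : 2 * t < a.val⟩ b hb hab
    by_contra hbt
    rw [Set.mem_ofPred_eq, not_lt] at hbt
    have hba : b < a := Fin.lt_def.2 (hbt.trans_lt hat)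
    rw [SimpleGraph.adj_comm, triangleChain_adj_of_lt hba] at hab
    have := ht b hb
    omega
  · rw [isAcyclic_induce_triangleChain_iff] at hS ⊢
    exact fun a ha b hb c hc => hS a ha.1 b hb.1 c hc.1

theorem firstEdge_notMem_forestEdges_of_lt {S : Set (Fin (2 * n + 1))}
    (hS : IsStrongForest (triangleChain n) k S) {t u : Fin n} (htu : t < u) (ht : n ≤ t + k)
    (hmem : firstEdge t ∈ forestEdges (triangleChain n) S) :
    firstEdge u ∉ forestEdges (triangleChain n) S := by
  intro hmem'
  obtain ⟨-, h₀, h₁⟩ := mk_mem_forestEdges.1 hmem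
  obtain ⟨-, -, hu⟩ := mk_mem_forestEdges.1 hmem'
  have hcut : ∀ a ∈ S, a.val ≠ 2 * (t + 1) := by
    intro a ha hat
    have hlt : (⟨2 * t + 1, by omega⟩ : Fin (2 * n + 1)) < a := by
      rw [Fin.lt_def, hat]
      simp only
      omega
    refine isAcyclic_induce_triangleChain_iff.1 hS.1 _ h₀ _ h₁ a ha (by simp) hlt ?_
    rw [triangleChain_adj_of_lt (lt_trans (by simp) hlt)]
    simp only
    omega
  have hle := (hS.2 ⟨_, hu⟩).trans
    (compEdgeCount_induce_triangleChain_le hS.1 hcut (by simp only; omega))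
  omega

theorem le_fStrong_triangleChain (k : ℕ) : k ≤ fStrong (triangleChain (2 * k)) k := by
  let shift (i : Fin k) : Fin (2 * k) := ⟨k + i, by omega⟩
  suffices Nat.card (Fin k) ≤ fStrong (triangleChain (2 * k)) k by simpa
  refine card_le_fStrong (E := fun i => firstEdge (shift i))
    (fun i => kValid_firstEdge (by simp only [shift]; omega)) fun S hS i hi j hj => ?_
  by_contra hij
  wlog hlt : i < j generalizing i j
  · exact this j hj i hi (Ne.symm hij) ((not_lt.1 hlt).lt_of_ne' hij)
  exact firstEdge_notMem_forestEdges_of_lt hS (t := shift i) (u := shift j)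
    (by simpa [shift]) (by simp only [shift]; omega) hi hj

end TriangleChain

/-- For every integer `k ≥ 1` there exist a finite simple graph `G` and an
induced subgraph `H` of `G` with `f_k(G) = 3` and `f_k(H) ≥ k`. -/
theorem exists_inducedSubgraph_fStrong_ge (k : ℕ) (hk : 1 ≤ k) :
    ∃ (m : ℕ) (G : SimpleGraph (Fin m)) (S : Set (Fin m)),
      fStrong G k = 3 ∧ k ≤ fStrong (G.induce S) k := by
  let G := corona (triangleChain (2 * k)) k
  let e : G ≃g G.overFin rfl := G.overFinIso rfl
  let f : triangleChain (2 * k) ↪g G.overFin rfl := e.toEmbedding.comp (coronaEmbedding _ k)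
  refine ⟨_, G.overFin rfl, Set.range f, ?_, ?_⟩
  · rw [← fStrong_congr e]
    exact le_antisymm fStrong_corona_triangleChain_le
      (three_le_fStrong_corona_triangleChain (by omega))
  · rw [← fStrong_congr f.isoInduceRange]
    exact le_fStrong_triangleChain k

end InducedArboricity
end

section
/- There exists a class C of finite simple graphs that is nowhere dense but is not f_k-bounded for any k ≥ 1; that is, for every k ≥ 1 and every constant c there is a graph G in C with f_k(G) > c. -/
open scoped Classical
open scoped Function

namespace InducedArboricity

/-!
An edge-maximal graph of girth more than `g` and maximum degree at most `D` is dense: two vertices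
of degree less than `D` are at distance at most `g`, since otherwise an edge could be added between
them, so at most `(D + 1) ^ g` vertices have degree less than `D`. On boundedly many vertices (in
terms of `g`) this gives a connected graph of girth more than `g` with more than `g` times as many
edges as vertices.

If such a graph has `g > k`, then every edge extends to a connected induced subgraph on `k + 1`
vertices, which is a tree; so every edge is `k`-valid. As a forest has fewer edges than the graph
has vertices, more than `g` forests are needed to cover them.

A cycle in a `d`-shallow minor of `H` lifts to a cycle in `H` that is at most `2 * d + 1` times as
long. Hence a graph of girth more than `3 * (2 * d + 1)` has no triangle as a `d`-shallow minor. The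
other graphs of the class have bounded order, as order is bounded in terms of `g`, so a large
complete graph is not a minor of any of them.
-/

open SimpleGraph

section Girth

variable {V : Type*} {G : SimpleGraph V}

theorem egirth_le_length_add_one {x y : V} (hxy : G.Adj x y) (p : G.Walk y x)
    (hp : s(x, y) ∉ p.edges) : G.egirth ≤ p.length + 1 := by
  have hcycle : (Walk.cons hxy p.bypass).IsCycle := by
    rw [Walk.cons_isCycle_iff]
    exact ⟨p.bypass_isPath, fun h ↦ hp (p.edges_bypass_subset_edges h)⟩
  refine (egirth_le_length hcycle).trans ?_
  rw [Walk.length_cons]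
  exact_mod_cast Nat.succ_le_succ p.length_bypass_le_length

theorem isAcyclic_of_card_lt_egirth [Finite V] (h : Nat.card V < G.egirth) : G.IsAcyclic := by
  have := Fintype.ofFinite V
  intro a c hc
  have hlength : c.length ≤ Nat.card V := by
    simpa using hc.support_nodup.length_le_card
  exact (h.trans_le (egirth_le_length hc)).not_ge (mod_cast hlength)

theorem edist_deleteEdges_add_one_le_length {a x y : V} {c : G.Walk a a} (hc : c.IsTrail)
    (hxy : s(x, y) ∈ c.edges) : (G.deleteEdges {s(x, y)}).edist x y + 1 ≤ c.length := by
  have hadj : G.Adj x y := c.adj_of_mem_edges hxy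
  wlog hsub : hadj.toWalk.IsSubwalk c generalizing x y
  · rw [Sym2.eq_swap, edist_comm]
    exact this (Sym2.eq_swap ▸ hxy) hadj.symm
      (((Walk.isSubwalk_toWalk_iff_mem_edges hadj).mpr hxy).resolve_left hsub)
  obtain ⟨q, r, rfl⟩ := hsub
  have hnodup := hc.edges_nodup
  simp only [Walk.edges_append, Adj.toWalk, Walk.edges_cons, Walk.edges_nil] at hnodup
  have hq : s(x, y) ∉ q.edges := by grind
  have hr : s(x, y) ∉ r.edges := by grind
  calc (G.deleteEdges {s(x, y)}).edist x y + 1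
      ≤ ((r.toDeleteEdge _ hr).append (q.toDeleteEdge _ hq)).length + 1 := by
        rw [edist_comm]
        exact add_le_add_left (edist_le _) 1
    _ = _ := by
        simp only [Adj.toWalk, Walk.length_append, Walk.length_cons, Walk.length_nil,
          Walk.length_transfer]
        push_cast
        ring

theorem min_egirth_edist_le_egirth_sup_edge (u v : V) :
    min G.egirth (G.edist u v + 1) ≤ (G ⊔ edge u v).egirth := by
  have hle : (G ⊔ edge u v).deleteEdges {s(u, v)} ≤ G := by
    simp
  rw [le_egirth]
  intro a c hc
  by_cases huv : s(u, v) ∈ c.edges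
  · exact (min_le_right _ _).trans <| (add_le_add_left (edist_anti hle) 1).trans <|
      edist_deleteEdges_add_one_le_length hc.isTrail huv
  · have hdelete : ∀ e ∈ c.edges, e ∉ ({s(u, v)} : Set (Sym2 V)) := by
      rintro e he rfl
      exact huv he
    calc min G.egirth (G.edist u v + 1)
        ≤ ((G ⊔ edge u v).deleteEdges {s(u, v)}).egirth := (min_le_left _ _).trans (egirth_anti hle)
      _ ≤ (c.toDeleteEdges _ hdelete).length := egirth_le_length (hc.toDeleteEdges _ _ hdelete)
      _ = c.length := by simp

end Girth

section Degree

variable {V : Type*} {G : SimpleGraph V} {D g : ℕ}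

theorem ncard_neighborSet_sup_edge_le [Finite V] {u v : V}
    (hG : ∀ w, (G.neighborSet w).ncard ≤ D) (hu : (G.neighborSet u).ncard < D)
    (hv : (G.neighborSet v).ncard < D) (w : V) :
    ((G ⊔ edge u v).neighborSet w).ncard ≤ D := by
  wlog hwv : w ≠ v generalizing u v
  · rcases eq_or_ne u v with rfl | huv
    · simpa using hG w
    · rw [edge_comm]
      exact this hv hu (by grind)
  rcases eq_or_ne w u with rfl | hwu
  · have hsub : (G ⊔ edge w v).neighborSet w ⊆ insert v (G.neighborSet w) := by
      intro z
      simp only [mem_neighborSet, sup_adj, edge_adj, Set.mem_insert_iff]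
      tauto
    exact (Set.ncard_le_ncard hsub).trans ((Set.ncard_insert_le _ _).trans hu)
  · have hsub : (G ⊔ edge u v).neighborSet w ⊆ G.neighborSet w := by
      intro z
      simp only [mem_neighborSet, sup_adj, edge_adj]
      tauto
    exact (Set.ncard_le_ncard hsub).trans (hG w)

theorem ncard_ball_add_one_le [Finite V] (hG : ∀ v, (G.neighborSet v).ncard ≤ D) (r : ℕ) (u : V) :
    (G.ball u (r + 1)).ncard ≤ (D + 1) ^ r := by
  induction r generalizing u with
  | zero => simp
  | succ r ih =>
    have := Fintype.ofFinite V
    let N : Finset V := (insert u (G.neighborSet u)).toFinset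
    have hN : N.card ≤ D + 1 := by
      rw [← Set.ncard_eq_toFinset_card']
      exact (Set.ncard_insert_le _ _).trans (Nat.succ_le_succ (hG u))
    have hsub : G.ball u ((r + 1 : ℕ) + 1) ⊆ ⋃ x ∈ N, G.ball x (r + 1) := by
      intro v hv
      rw [mem_ball_comm, mem_ball] at hv
      obtain ⟨p, hp⟩ := exists_walk_of_edist_ne_top hv.ne_top
      rw [← hp] at hv
      simp only [Set.mem_iUnion, N, Set.mem_toFinset, exists_prop]
      cases p with
      | nil => exact ⟨u, Set.mem_insert _ _, G.mem_ball_self (by simp)⟩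
      | @cons _ x _ hux q =>
        refine ⟨x, Set.mem_insert_of_mem _ hux, ?_⟩
        rw [mem_ball_comm, mem_ball]
        refine (edist_le q).trans_lt ?_
        rw [Walk.length_cons] at hv
        norm_cast at hv ⊢
        omega
    calc (G.ball u ((r + 1 : ℕ) + 1)).ncard
        ≤ ∑ x ∈ N, (G.ball x (r + 1)).ncard :=
          (Set.ncard_le_ncard hsub).trans (N.set_ncard_biUnion_le _)
      _ ≤ N.card * (D + 1) ^ r := Finset.sum_le_card_nsmul N _ _ fun x _ ↦ ih x
      _ ≤ (D + 1) ^ (r + 1) := by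
          rw [pow_succ']
          exact Nat.mul_le_mul_right _ hN

theorem card_mul_le_two_mul_ncard_edgeSet_add [Finite V] (G : SimpleGraph V) (D : ℕ) :
    Nat.card V * D ≤ 2 * G.edgeSet.ncard + {v | (G.neighborSet v).ncard < D}.ncard * D := by
  have := Fintype.ofFinite V
  have hdegree (v : V) : G.degree v = (G.neighborSet v).ncard := by
    rw [Set.ncard_eq_toFinset_card', degree, neighborFinset]
  calc Nat.card V * D = ∑ _v : V, D := by simp
    _ ≤ ∑ v, (G.degree v + if (G.neighborSet v).ncard < D then D else 0) := by
        refine Finset.sum_le_sum fun v _ ↦ ?_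
        rw [hdegree]
        split_ifs <;> omega
    _ = 2 * G.edgeSet.ncard + {v | (G.neighborSet v).ncard < D}.ncard * D := by
        rw [Finset.sum_add_distrib, G.sum_degrees_eq_twice_card_edges, ← Finset.sum_filter,
          Finset.sum_const, smul_eq_mul, Set.ncard_eq_toFinset_card',
          Set.ncard_eq_toFinset_card', Set.toFinset_ofPred, edgeFinset]

theorem ncard_neighborSet_pathGraph_le {n : ℕ} (v : Fin n) :
    ((pathGraph n).neighborSet v).ncard ≤ 2 := by
  rw [← Set.ncard_image_of_injective _ Fin.val_injective]
  have hsub : Fin.val '' (pathGraph n).neighborSet v ⊆ {v.val + 1, v.val - 1} := by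
    rintro _ ⟨w, hw, rfl⟩
    rw [mem_neighborSet, pathGraph_adj] at hw
    grind
  exact (Set.ncard_le_ncard hsub).trans ((Set.ncard_insert_le _ _).trans (by simp))

/-- `G` has girth more than `g` and maximum degree at most `D`. Dense graphs of large girth arise
as the edge-maximal graphs with this property. -/
def GirthDegreeBound (g D : ℕ) (G : SimpleGraph V) : Prop :=
  g < G.egirth ∧ ∀ v, (G.neighborSet v).ncard ≤ D

theorem mem_ball_of_maximal_girthDegreeBound [Finite V] (hg : 1 ≤ g)
    (hG : Maximal (GirthDegreeBound g D) G) {u v : V} (hu : (G.neighborSet u).ncard < D)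
    (hv : (G.neighborSet v).ncard < D) : v ∈ G.ball u (g + 1) := by
  rw [mem_ball_comm, mem_ball]
  by_contra! hfar
  have hadj : ¬ G.Adj u v := by
    intro h
    rw [edist_eq_one_iff_adj.mpr h] at hfar
    have : g + 1 ≤ 1 := mod_cast hfar
    omega
  have hne : u ≠ v := by
    rintro rfl
    simp at hfar
  have hbound : GirthDegreeBound g D (G ⊔ edge u v) := by
    refine ⟨?_, ncard_neighborSet_sup_edge_le hG.prop.2 hu hv⟩
    refine (lt_min hG.prop.1 ?_).trans_le (min_egirth_edist_le_egirth_sup_edge u v)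
    exact ((ENat.add_one_le_iff (ENat.natCast_ne_top g)).mp hfar).trans_le le_self_add
  exact hG.not_prop_of_gt (G.lt_sup_edge _ _ hne hadj) hbound

theorem ncard_lt_degree_of_maximal_girthDegreeBound [Finite V] (hg : 1 ≤ g)
    (hG : Maximal (GirthDegreeBound g D) G) :
    {v | (G.neighborSet v).ncard < D}.ncard ≤ (D + 1) ^ g := by
  rcases Set.eq_empty_or_nonempty {v | (G.neighborSet v).ncard < D} with hempty | ⟨u, hu⟩
  · simp [hempty]
  · exact (Set.ncard_le_ncard fun v hv ↦ mem_ball_of_maximal_girthDegreeBound hg hG hu hv).trans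
      (ncard_ball_add_one_le hG.prop.2 g u)

theorem exists_connected_girthDegreeBound {n : ℕ} [NeZero n] (g : ℕ) {D : ℕ} (hD : 2 ≤ D) :
    ∃ T : SimpleGraph (Fin n), T.Connected ∧ GirthDegreeBound g D T := by
  have hpath : (pathGraph n).Connected := ⟨pathGraph_preconnected n⟩
  obtain ⟨T, hle, hT⟩ := hpath.exists_isTree_le
  refine ⟨T, hT.connected, ?_, fun v ↦ ?_⟩
  · simp [hT.isAcyclic.egirth_eq_top]
  · exact (Set.ncard_le_ncard fun w hw ↦ hle hw).trans
      ((ncard_neighborSet_pathGraph_le v).trans hD)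

theorem exists_connected_lt_egirth_mul_lt_ncard_edgeSet {g n : ℕ} (hg : 1 ≤ g) (c : ℕ)
    (hn : 2 * (4 * c + 5) ^ g ≤ n) :
    ∃ G : SimpleGraph (Fin n), G.Connected ∧ g < G.egirth ∧ c * n < G.edgeSet.ncard := by
  have hpos : 0 < n := lt_of_lt_of_le (by positivity) hn
  have : NeZero n := ⟨hpos.ne'⟩
  obtain ⟨T, hT, hTbound⟩ :=
    exists_connected_girthDegreeBound (n := n) g (D := 4 * c + 4) (by omega)
  obtain ⟨G, hTG, hG⟩ := Finite.exists_le_maximal hTbound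
  refine ⟨G, hT.mono hTG, hG.prop.1, ?_⟩
  have hlow := ncard_lt_degree_of_maximal_girthDegreeBound hg hG
  have hedges := card_mul_le_two_mul_ncard_edgeSet_add G (4 * c + 4)
  rw [Nat.card_fin] at hedges
  have hhalf : 2 * {v | (G.neighborSet v).ncard < 4 * c + 4}.ncard ≤ n :=
    (Nat.mul_le_mul_left 2 hlow).trans hn
  nlinarith [Nat.mul_le_mul_right (4 * c + 4) hhalf]

end Degree

section ShallowMinor

variable {V W : Type*} {G : SimpleGraph V} {H : SimpleGraph W} {B : V → Set W} {d : ℕ}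

theorem exists_walk_of_induce_radius_le {S : Set W}
    (hS : ∃ c : S, ∀ y : S, (H.induce S).Reachable c y ∧ (H.induce S).dist c y ≤ d)
    {x y : W} (hx : x ∈ S) (hy : y ∈ S) :
    ∃ p : H.Walk x y, p.length ≤ 2 * d ∧ ∀ z ∈ p.support, z ∈ S := by
  obtain ⟨c, hc⟩ := hS
  obtain ⟨hcx, hdx⟩ := hc ⟨x, hx⟩
  obtain ⟨hcy, hdy⟩ := hc ⟨y, hy⟩
  obtain ⟨p, hp⟩ := hcx.exists_walk_length_eq_dist
  obtain ⟨q, hq⟩ := hcy.exists_walk_length_eq_dist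
  refine ⟨(p.reverse.append q).map (Embedding.induce S).toHom, ?_, fun z hz ↦ ?_⟩
  · refine (Walk.length_map _ _).trans_le ?_
    rw [Walk.length_append, Walk.length_reverse]
    omega
  · obtain ⟨z, -, rfl⟩ := List.mem_map.mp (Walk.support_map _ _ ▸ hz)
    exact z.2

/-- `B` is a family of branch sets exhibiting `G` as a `d`-shallow minor of `H`; this unbundles
`IsShallowMinor`. -/
structure IsShallowModel (d : ℕ) (G : SimpleGraph V) (H : SimpleGraph W) (B : V → Set W) :
    Prop where
  pairwise_disjoint : Pairwise (Disjoint on B)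
  radius_le (v : V) : ∃ c : B v, ∀ y : B v,
    (H.induce (B v)).Reachable c y ∧ (H.induce (B v)).dist c y ≤ d
  exists_adj {u v : V} (huv : G.Adj u v) : ∃ x ∈ B u, ∃ y ∈ B v, H.Adj x y

theorem IsShallowMinor.exists_isShallowModel (h : IsShallowMinor d G H) :
    ∃ B, IsShallowModel d G H B := by
  obtain ⟨B, hdisjoint, hradius, hadj⟩ := h
  exact ⟨B, hdisjoint, hradius, fun huv ↦ hadj _ _ huv⟩

theorem IsShallowModel.eq_of_mem (hB : IsShallowModel d G H B) {u v : V} {x : W} (hu : x ∈ B u)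
    (hv : x ∈ B v) : u = v :=
  hB.pairwise_disjoint.eq (Set.not_disjoint_iff.mpr ⟨x, hu, hv⟩)

theorem IsShallowModel.exists_walk_lift (hB : IsShallowModel d G H B) {u v : V} (p : G.Walk u v)
    {x y : W} (hx : x ∈ B u) (hy : y ∈ B v) :
    ∃ q : H.Walk x y, q.length ≤ (2 * d + 1) * p.length + 2 * d ∧
      ∀ a b, a ≠ b → ∀ x' ∈ B a, ∀ y' ∈ B b, s(x', y') ∈ q.edges → s(a, b) ∈ p.edges := by
  induction p generalizing x with
  | @nil u =>
    obtain ⟨q, hq, hqB⟩ := exists_walk_of_induce_radius_le (hB.radius_le u) hx hy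
    refine ⟨q, by simpa using hq, fun a b hab x' hx' y' hy' he ↦ (hab ?_).elim⟩
    exact (hB.eq_of_mem hx' (hqB _ (q.fst_mem_support_of_mem_edges he))).trans
      (hB.eq_of_mem hy' (hqB _ (q.snd_mem_support_of_mem_edges he))).symm
  | @cons u w v huw p ih =>
    obtain ⟨x₁, hx₁, y₁, hy₁, hadj⟩ := hB.exists_adj huw
    obtain ⟨q, hq, hqB⟩ := exists_walk_of_induce_radius_le (hB.radius_le u) hx hx₁
    obtain ⟨r, hr, hrp⟩ := ih hy₁ hy
    refine ⟨q.append (.cons hadj r), ?_, fun a b hab x' hx' y' hy' he ↦ ?_⟩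
    · rw [Walk.length_append, Walk.length_cons, Walk.length_cons, mul_add]
      omega
    · rw [Walk.edges_append, Walk.edges_cons, List.mem_append, List.mem_cons] at he
      rw [Walk.edges_cons, List.mem_cons]
      rcases he with he | he | he
      · exact (hab <| (hB.eq_of_mem hx' (hqB _ (q.fst_mem_support_of_mem_edges he))).trans
          (hB.eq_of_mem hy' (hqB _ (q.snd_mem_support_of_mem_edges he))).symm).elim
      · left
        rcases Sym2.eq_iff.mp he with ⟨rfl, rfl⟩ | ⟨rfl, rfl⟩
        · rw [hB.eq_of_mem hx' hx₁, hB.eq_of_mem hy' hy₁]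
        · rw [hB.eq_of_mem hx' hy₁, hB.eq_of_mem hy' hx₁, Sym2.eq_swap]
      · exact .inr (hrp a b hab x' hx' y' hy' he)

theorem IsShallowMinor.egirth_le (h : IsShallowMinor d G H) :
    H.egirth ≤ (2 * d + 1 : ℕ) * G.egirth := by
  obtain ⟨B, hB⟩ := h.exists_isShallowModel
  by_cases hG : G.IsAcyclic
  · rw [hG.egirth_eq_top, ENat.mul_top (by simp)]
    exact le_top
  obtain ⟨a, c, hc, hlength⟩ := exists_egirth_eq_length.mpr hG
  rw [hlength]
  cases c with
  | nil => exact (hc.ne_nil rfl).elim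
  | @cons _ b _ hab p =>
    obtain ⟨-, hp⟩ := (Walk.cons_isCycle_iff p hab).mp hc
    obtain ⟨x, hx, y, hy, hxy⟩ := hB.exists_adj hab
    obtain ⟨q, hq, hqp⟩ := hB.exists_walk_lift p hy hx
    refine (egirth_le_length_add_one hxy q fun he ↦ hp (hqp a b hab.ne x hx y hy he)).trans ?_
    rw [Walk.length_cons]
    norm_cast
    rw [mul_add]
    omega

theorem IsShallowMinor.card_le [Finite W] (h : IsShallowMinor d G H) :
    Nat.card V ≤ Nat.card W := by
  obtain ⟨B, hB⟩ := h.exists_isShallowModel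
  choose c _ using hB.radius_le
  refine Nat.card_le_card_of_injective (fun v ↦ (c v : W)) fun u v (huv : (c u : W) = c v) ↦ ?_
  exact hB.eq_of_mem (c u).2 (huv ▸ (c v).2)

/-- The graphs that, for some `i`, have girth more than `i` and at most `N i` vertices. -/
def girthBoundedOrderClass (N : ℕ → ℕ) : GraphClass :=
  fun n ↦ {H | ∃ i : ℕ, n ≤ N i ∧ i < H.egirth}

theorem nowhereDense_girthBoundedOrderClass (N : ℕ → ℕ) :
    NowhereDense (girthBoundedOrderClass N) := by
  intro d
  let t := (2 * d + 1) * 3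
  let m := 3 + (Finset.range t).sup N
  refine ⟨m, ⊤, ?_⟩
  rintro ⟨n, H, ⟨i, hn, hi⟩, hminor⟩
  have hit : i < t := by
    have hH := hminor.egirth_le
    rw [egirth_top (by simp [m])] at hH
    exact_mod_cast hi.trans_le hH
  have hmn : m ≤ n := by simpa using hminor.card_le
  have hNi : N i ≤ (Finset.range t).sup N := Finset.le_sup (Finset.mem_range.mpr hit)
  omega

end ShallowMinor

section StrongForest

variable {V : Type*} {G : SimpleGraph V} {k : ℕ}

theorem exists_connected_induce_insert (hG : G.Connected) {S : Set V}
    (hS : (G.induce S).Connected) (hne : S ≠ Set.univ) :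
    ∃ v ∉ S, (G.induce (insert v S)).Connected := by
  obtain ⟨⟨u, hu⟩⟩ := hS.nonempty
  obtain ⟨w, hw⟩ := (Set.ne_univ_iff_exists_notMem S).mp hne
  obtain ⟨p⟩ := hG.preconnected u w
  obtain ⟨e, -, hfst, hsnd⟩ := p.exists_boundary_dart S hu hw
  refine ⟨e.snd, hsnd, ?_⟩
  rw [← Set.union_singleton]
  exact connected_induce_union hS.preconnected (by simp) hfst rfl e.adj

theorem exists_connected_induce_superset_ncard_eq [Finite V] (hG : G.Connected) {S : Set V}
    (hS : (G.induce S).Connected) {m : ℕ} (hSm : S.ncard ≤ m) (hm : m ≤ Nat.card V) :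
    ∃ T, S ⊆ T ∧ (G.induce T).Connected ∧ T.ncard = m := by
  induction m, hSm using Nat.le_induction with
  | base => exact ⟨S, subset_rfl, hS, rfl⟩
  | succ m _ ih =>
    obtain ⟨T, hST, hT, hTm⟩ := ih (Nat.le_of_succ_le hm)
    have hne : T ≠ Set.univ := by
      rintro rfl
      rw [Set.ncard_univ] at hTm
      omega
    obtain ⟨v, hv, hvT⟩ := exists_connected_induce_insert hG hT hne
    exact ⟨insert v T, hST.trans (Set.subset_insert v T), hvT, by
      rw [Set.ncard_insert_of_notMem hv, hTm]⟩

theorem isStrongForest_of_isTree_induce [Finite V] {S : Set V} (hS : (G.induce S).IsTree)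
    (hk : k < S.ncard) : IsStrongForest G k S := by
  refine ⟨hS.isAcyclic, fun v ↦ ?_⟩
  have hcomp : compEdgeCount (G.induce S) v = (G.induce S).edgeSet.ncard := by
    rw [compEdgeCount]
    congr 1
    ext e
    exact and_iff_left fun x _ ↦ hS.connected.preconnected v x
  have hcard := (isTree_iff_connected_and_card.mp hS).2
  rw [Nat.card_coe_set_eq, Nat.card_coe_set_eq] at hcard
  omega

theorem kValid_of_lt_egirth [Finite V] (hG : G.Connected) (hk : 1 ≤ k) (hcard : k < Nat.card V)
    (hgirth : (k + 1 : ℕ) < G.egirth) {e : Sym2 V} (he : e ∈ G.edgeSet) : KValid G k e := by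
  induction e with
  | _ u v =>
  have huv : G.Adj u v := he
  obtain ⟨T, hsub, hT, hTk⟩ := exists_connected_induce_superset_ncard_eq hG
    (induce_pair_connected_of_adj huv) (m := k + 1)
    (by rw [Set.ncard_pair huv.ne]; omega) hcard
  have hacyclic : (G.induce T).IsAcyclic := by
    refine isAcyclic_of_card_lt_egirth ?_
    rw [Nat.card_coe_set_eq, hTk]
    exact hgirth.trans_le (Embedding.induce T).isContained.egirth_le
  refine ⟨T, isStrongForest_of_isTree_induce ⟨hT, hacyclic⟩ (by omega), he, fun x hx ↦ ?_⟩
  exact hsub (by simpa using hx)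

theorem ncard_edgeSet_le_of_isAcyclic [Finite V] (hG : G.IsAcyclic) :
    G.edgeSet.ncard ≤ Nat.card V := by
  cases isEmpty_or_nonempty V
  · simp [Set.eq_empty_of_isEmpty G.edgeSet]
  · obtain ⟨T, hle, -, hT⟩ := connected_top.exists_isTree_le_of_le_of_isAcyclic le_top hG
    have hcard := (isTree_iff_connected_and_card.mp hT).2
    rw [Nat.card_coe_set_eq] at hcard
    have := Set.ncard_le_ncard (edgeSet_subset_edgeSet.mpr hle)
    omega

theorem ncard_forestEdges_le [Finite V] {S : Set V} (hS : (G.induce S).IsAcyclic) :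
    (forestEdges G S).ncard ≤ Nat.card V := by
  have hsub : forestEdges G S ⊆ Sym2.map Subtype.val '' (G.induce S).edgeSet := by
    rintro ⟨u, v⟩ ⟨huv, hmem⟩
    exact ⟨s(⟨u, hmem u (Sym2.mem_mk_left u v)⟩, ⟨v, hmem v (Sym2.mem_mk_right u v)⟩), huv, rfl⟩
  calc (forestEdges G S).ncard
      ≤ (G.induce S).edgeSet.ncard :=
        (Set.ncard_le_ncard hsub).trans (Set.ncard_image_le (Set.toFinite _))
    _ ≤ Nat.card S := ncard_edgeSet_le_of_isAcyclic hS
    _ ≤ Nat.card V := Finite.card_subtype_le _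

theorem exists_strongForest_cover [Finite V] (G : SimpleGraph V) (k : ℕ) :
    ∃ F : Fin (fStrong G k) → Set V, (∀ i, IsStrongForest G k (F i)) ∧
      ∀ e, KValid G k e → ∃ i, e ∈ forestEdges G (F i) := by
  refine Nat.sInf_mem (s := {N | ∃ F : Fin N → Set V, (∀ i, IsStrongForest G k (F i)) ∧
    ∀ e : Sym2 V, KValid G k e → ∃ i, e ∈ forestEdges G (F i)}) ?_
  let E := {S : Set V // IsStrongForest G k S}
  let φ : E ≃ Fin (Nat.card E) := Finite.equivFin E
  refine ⟨Nat.card E, fun i ↦ φ.symm i, fun i ↦ (φ.symm i).2, ?_⟩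
  rintro e ⟨S, hS, he⟩
  exact ⟨φ ⟨S, hS⟩, by simpa using he⟩

theorem ncard_kValid_le [Finite V] (G : SimpleGraph V) (k : ℕ) :
    {e | KValid G k e}.ncard ≤ fStrong G k * Nat.card V := by
  obtain ⟨F, hF, hcover⟩ := exists_strongForest_cover G k
  calc {e | KValid G k e}.ncard
      ≤ (⋃ i, forestEdges G (F i)).ncard :=
        Set.ncard_le_ncard fun e he ↦ Set.mem_iUnion.mpr (hcover e he)
    _ ≤ ∑ i, (forestEdges G (F i)).ncard := Set.ncard_iUnion_le_of_fintype _
    _ ≤ ∑ _i : Fin (fStrong G k), Nat.card V :=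
        Finset.sum_le_sum fun i _ ↦ ncard_forestEdges_le (hF i).1
    _ = fStrong G k * Nat.card V := by simp

end StrongForest

/-- There is a class of finite simple graphs that is nowhere dense but is
not `f_k`-bounded for any `k ≥ 1`: for every `k ≥ 1` and every constant `c` some graph `G`
in the class has `f_k(G) > c`. -/
theorem exists_nowhereDense_not_fStrong_bounded :
    ∃ C : GraphClass, NowhereDense C ∧
      ∀ k : ℕ, 1 ≤ k → ∀ c : ℕ, ∃ (n : ℕ), ∃ G ∈ C n, c < fStrong G k := by
  refine ⟨girthBoundedOrderClass fun i ↦ 2 * (4 * i + 5) ^ i,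
    nowhereDense_girthBoundedOrderClass _, fun k hk c ↦ ?_⟩
  let g := k + c + 1
  let n := 2 * (4 * g + 5) ^ g
  obtain ⟨G, hconn, hgirth, hdense⟩ :=
    exists_connected_lt_egirth_mul_lt_ncard_edgeSet (g := g) (n := n) (by omega) g le_rfl
  refine ⟨n, G, ⟨g, le_rfl, hgirth⟩, ?_⟩
  have hkn : k < n := by
    have : g < (4 * g + 5) ^ g := Nat.lt_pow_self (by omega)
    omega
  have hvalid : G.edgeSet ⊆ {e | KValid G k e} := fun e he ↦
    kValid_of_lt_egirth hconn hk (by simpa using hkn)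
      (lt_of_le_of_lt (mod_cast show k + 1 ≤ g by omega) hgirth) he
  have hcover : G.edgeSet.ncard ≤ fStrong G k * n := by
    simpa using (Set.ncard_le_ncard hvalid).trans (ncard_kValid_le G k)
  have hg : g < fStrong G k := lt_of_mul_lt_mul_right (hdense.trans_le hcover) (Nat.zero_le n)
  omega

end InducedArboricity
end
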